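/- For every ε > 0, every graph G, and every equipartition P₀ of V(G), there exists an equipartition of V(G) refining P₀ that is weak ε-regular and has order at most |P₀| · 2^{16/ε⁵}. -/

import Mathlib

/-!
The proof is an energy increment. Attach to a partition `P` the step function
`f_P(u, v) = d(P(u), P(v))`, where `P(u)` is the part of `u`, and the energy `∑_{u,v} f_P(u, v)²`,
which lies between `0` and `n²`. If `Q` refines `P`, then `f_Q - f_P` is orthogonal to `f_P`, so the
energy grows by exactly `∑ (f_Q - f_P)²` (`energy_sub`).

Suppose that an equipartition `P` is not weak `ε`-regular, as witnessed by `S` and `T`, and put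
`t = ⌈4/ε²⌉`. Split every part of `P` into `t` parts of nearly equal size, so that all but at most
`n/t` vertices of `S` (resp. `T`) lie in new parts contained in `S` (resp. `T`)
(`exists_refinement`). If the parts of `P` are too small for this, the discrete partition serves
instead. On the unions `S'` and `T'` of those new parts, `f_Q` has the same block sums as the
adjacency function, and discarding the remaining vertices costs at most half of the irregularity.
Hence `∑_{S' × T'} |f_Q - f_P| > (ε/2)|S||T|`, and Cauchy–Schwarz yields an energy gain of at least
`(ε⁴/4) n²` (`gain`).

There are therefore at most `4/ε⁴` such steps, each multiplying the order by at most
`t ≤ 2^{4/ε}`, which gives the bound `2^{16/ε⁵}`.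
-/

open Finset
open scoped Classical

/-- `eCnt G A B` is the number of ordered pairs `(u,v) ∈ A × B` with `uv` an edge of `G`. -/
noncomputable def eCnt {V : Type*} [Fintype V] (G : SimpleGraph V) (A B : Finset V) : ℕ :=
  ((A ×ˢ B).filter fun p => G.Adj p.1 p.2).card

/-- The edge density `d(A,B)` between vertex subsets `A` and `B`. -/
noncomputable def dens {V : Type*} [Fintype V] (G : SimpleGraph V) (A B : Finset V) : ℝ :=
  eCnt G A B / (A.card * B.card)

/-- A partition `{V₁,…,V_k}` of the vertex set is weak `ε`-regular if for all disjoint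
`S, T ⊆ V` with `|S|, |T| ≥ ε|V|` we have
`Σ_{i,j} (|S ∩ V_i||T ∩ V_j|/(|S||T|))·|d(S ∩ V_i, T ∩ V_j) − d(V_i,V_j)| ≤ ε`. -/
def IsWeakRegular {V : Type*} [Fintype V] [DecidableEq V] (G : SimpleGraph V) (ε : ℝ)
    (P : Finpartition (univ : Finset V)) : Prop :=
  ∀ S T : Finset V, Disjoint S T →
    ε * Fintype.card V ≤ S.card → ε * Fintype.card V ≤ T.card →
    ∑ U ∈ P.parts, ∑ U' ∈ P.parts,
      ((S ∩ U).card : ℝ) * ((T ∩ U').card : ℝ) / (S.card * T.card) *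
        |dens G (S ∩ U) (T ∩ U') - dens G U U'| ≤ ε

/-! ### Step functions and energy -/

/-- The adjacency indicator of `G` as a real-valued function. -/
noncomputable def adjInd {V : Type*} (G : SimpleGraph V) (u v : V) : ℝ :=
  if G.Adj u v then 1 else 0

/-- The step function of `P`: the density between the parts containing `u` and `v`. -/
noncomputable def stepFn {V : Type*} [Fintype V] [DecidableEq V] (G : SimpleGraph V)
    (P : Finpartition (univ : Finset V)) (u v : V) : ℝ :=
  dens G (P.part u) (P.part v)

/-- The energy of `P`, not normalised: it ranges in `[0, n²]`. -/
noncomputable def energy {V : Type*} [Fintype V] [DecidableEq V] (G : SimpleGraph V)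
    (P : Finpartition (univ : Finset V)) : ℝ :=
  ∑ u, ∑ v, stepFn G P u v ^ 2

/-- The union of the parts of `Q` contained in `X`. -/
noncomputable def core {V : Type*} [Fintype V] [DecidableEq V]
    (Q : Finpartition (univ : Finset V)) (X : Finset V) : Finset V :=
  X.filter fun u => Q.part u ⊆ X

section Basic

set_option linter.unusedSectionVars false

variable {V : Type*} [Fintype V] [DecidableEq V] (G : SimpleGraph V)

lemma eCnt_eq_sum (A B : Finset V) : (eCnt G A B : ℝ) = ∑ u ∈ A, ∑ v ∈ B, adjInd G u v := by
  simp only [eCnt, adjInd, card_filter, sum_product]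
  push_cast
  rfl

lemma card_mul_card_mul_dens (A B : Finset V) :
    (A.card : ℝ) * B.card * dens G A B = ∑ u ∈ A, ∑ v ∈ B, adjInd G u v := by
  rw [← eCnt_eq_sum, _root_.dens]
  by_cases h : (A.card : ℝ) * B.card = 0
  · have : A = ∅ ∨ B = ∅ := by simpa using h
    rcases this with rfl | rfl <;> simp [eCnt]
  · exact mul_div_cancel₀ _ h

lemma dens_nonneg (A B : Finset V) : 0 ≤ dens G A B := by
  unfold _root_.dens; positivity

lemma dens_le_one (A B : Finset V) : dens G A B ≤ 1 := by
  unfold _root_.dens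
  apply div_le_one_of_le₀ _ (by positivity)
  have : eCnt G A B ≤ A.card * B.card := by
    rw [← card_product]; exact card_filter_le _ _
  exact_mod_cast this

lemma abs_adjInd_sub_stepFn_le (P : Finpartition (univ : Finset V)) (u v : V) :
    |adjInd G u v - stepFn G P u v| ≤ 1 := by
  have h1 := dens_nonneg G (P.part u) (P.part v)
  have h2 := dens_le_one G (P.part u) (P.part v)
  unfold adjInd stepFn
  rw [abs_le]
  split_ifs <;> constructor <;> linarith

lemma sum_parts (P : Finpartition (univ : Finset V)) (S : Finset V) (g : V → ℝ) :
    ∑ U ∈ P.parts, ∑ u ∈ S ∩ U, g u = ∑ u ∈ S, g u := by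
  rw [← sum_fiberwise_of_maps_to (g := P.part) (t := P.parts) (s := S)
    (fun u _ => P.part_mem.2 (mem_univ u))]
  refine sum_congr rfl fun U hU => sum_congr ?_ fun _ _ => rfl
  ext u
  simp [P.part_eq_iff_mem hU]

lemma sum_parts₂ (P : Finpartition (univ : Finset V)) (S T : Finset V) (g : V → V → ℝ) :
    ∑ U ∈ P.parts, ∑ U' ∈ P.parts, ∑ u ∈ S ∩ U, ∑ v ∈ T ∩ U', g u v
      = ∑ u ∈ S, ∑ v ∈ T, g u v := by
  rw [← sum_parts P S]
  refine sum_congr rfl fun U _ => ?_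
  rw [sum_comm]
  exact sum_congr rfl fun u _ => sum_parts P T _

lemma stepFn_eq (P : Finpartition (univ : Finset V)) {U U' : Finset V} (hU : U ∈ P.parts)
    (hU' : U' ∈ P.parts) {u v : V} (hu : u ∈ U) (hv : v ∈ U') :
    stepFn G P u v = dens G U U' := by
  rw [stepFn, P.part_eq_of_mem hU hu, P.part_eq_of_mem hU' hv]

lemma inter_part_of_closed (Q : Finpartition (univ : Finset V)) {X W : Finset V}
    (hX : ∀ u ∈ X, Q.part u ⊆ X) (hW : W ∈ Q.parts) : X ∩ W = W ∨ X ∩ W = ∅ := by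
  rcases (X ∩ W).eq_empty_or_nonempty with h | ⟨u, hu⟩
  · exact Or.inr h
  · left
    rw [mem_inter] at hu
    have := hX u hu.1
    rw [Q.part_eq_of_mem hW hu.2] at this
    exact inter_eq_right.2 this

/-- On products of unions of parts, the step function averages to the adjacency function. -/
lemma sum_stepFn_of_closed (Q : Finpartition (univ : Finset V)) {X Y : Finset V}
    (hX : ∀ u ∈ X, Q.part u ⊆ X) (hY : ∀ u ∈ Y, Q.part u ⊆ Y) :
    ∑ u ∈ X, ∑ v ∈ Y, stepFn G Q u v = ∑ u ∈ X, ∑ v ∈ Y, adjInd G u v := by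
  rw [← sum_parts₂ Q, ← sum_parts₂ Q]
  refine sum_congr rfl fun W hW => sum_congr rfl fun W' hW' => ?_
  rcases inter_part_of_closed Q hX hW with h | h <;>
    rcases inter_part_of_closed Q hY hW' with h' | h' <;> rw [h, h'] <;> try simp
  rw [← card_mul_card_mul_dens]
  rw [sum_congr rfl fun u hu => sum_congr rfl fun v hv => stepFn_eq G Q hW hW' hu hv]
  simp [mul_assoc]

lemma part_subset_of_le {P Q : Finpartition (univ : Finset V)} (hQP : Q ≤ P) {U : Finset V}
    (hU : U ∈ P.parts) {u : V} (hu : u ∈ U) : Q.part u ⊆ U := by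
  obtain ⟨U', hU', h⟩ := hQP (Q.part_mem.2 (mem_univ u))
  have h1 : u ∈ U' := h (Q.mem_part (mem_univ u))
  rwa [P.eq_of_mem_parts hU hU' hu h1]

/-- Pythagoras: refining a partition increases the energy by the squared distance of the
step functions. -/
lemma energy_sub {P Q : Finpartition (univ : Finset V)} (hQP : Q ≤ P) :
    ∑ u, ∑ v, (stepFn G Q u v - stepFn G P u v) ^ 2 = energy G Q - energy G P := by
  have key : ∑ u, ∑ v, (stepFn G Q u v - stepFn G P u v) * stepFn G P u v = 0 := by
    rw [← sum_parts₂ P]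
    refine sum_eq_zero fun U hU => sum_eq_zero fun U' hU' => ?_
    rw [univ_inter, univ_inter]
    rw [sum_congr rfl fun u hu => sum_congr rfl fun v hv => by
      rw [show stepFn G P u v = dens G U U' from stepFn_eq G P hU hU' hu hv]]
    simp_rw [← sum_mul]
    have hQ := sum_stepFn_of_closed G Q (fun u hu => part_subset_of_le hQP hU hu)
      (fun u hu => part_subset_of_le hQP hU' hu)
    have hP := card_mul_card_mul_dens G U U'
    simp only [sum_sub_distrib, hQ, ← hP]
    simp [mul_assoc]
  have : ∀ u v, (stepFn G Q u v - stepFn G P u v) ^ 2 = stepFn G Q u v ^ 2 - stepFn G P u v ^ 2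
      - 2 * ((stepFn G Q u v - stepFn G P u v) * stepFn G P u v) := by intros; ring
  simp_rw [this, sum_sub_distrib, ← mul_sum, key]
  simp [energy]

lemma energy_nonneg (P : Finpartition (univ : Finset V)) : 0 ≤ energy G P :=
  sum_nonneg fun _ _ => sum_nonneg fun _ _ => sq_nonneg _

lemma energy_le (P : Finpartition (univ : Finset V)) :
    energy G P ≤ (Fintype.card V : ℝ) ^ 2 := by
  calc energy G P ≤ ∑ _u : V, ∑ _v : V, (1 : ℝ) := by
        refine sum_le_sum fun u _ => sum_le_sum fun v _ => ?_
        exact pow_le_one₀ (dens_nonneg _ _ _) (dens_le_one _ _ _)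
    _ = _ := by simp [sq]

/-! ### The energy gain -/

/-- The sum in the definition of weak regularity, with its denominator cleared, as a sum of
absolute values of block sums of `adjInd - stepFn`. -/
lemma irregularity_eq (P : Finpartition (univ : Finset V)) (S T : Finset V) :
    ∑ U ∈ P.parts, ∑ U' ∈ P.parts,
      ((S ∩ U).card : ℝ) * ((T ∩ U').card : ℝ) / (S.card * T.card) *
        |dens G (S ∩ U) (T ∩ U') - dens G U U'| =
    (∑ U ∈ P.parts, ∑ U' ∈ P.parts,
      |∑ u ∈ S ∩ U, ∑ v ∈ T ∩ U', (adjInd G u v - stepFn G P u v)|) / (S.card * T.card) := by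
  simp_rw [sum_div]
  refine sum_congr rfl fun U hU => sum_congr rfl fun U' hU' => ?_
  rw [div_mul_eq_mul_div]
  congr 1
  have h1 : ∑ u ∈ S ∩ U, ∑ v ∈ T ∩ U', (adjInd G u v - stepFn G P u v) =
      ((S ∩ U).card : ℝ) * (T ∩ U').card * (dens G (S ∩ U) (T ∩ U') - dens G U U') := by
    rw [mul_sub, card_mul_card_mul_dens]
    simp_rw [sum_sub_distrib]
    rw [sum_congr rfl fun u hu => sum_congr rfl fun v hv => stepFn_eq G P hU hU'
      (mem_inter.1 hu).2 (mem_inter.1 hv).2]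
    simp [mul_assoc]
  rw [h1, abs_mul,
    abs_of_nonneg (by positivity : (0 : ℝ) ≤ ((S ∩ U).card : ℝ) * (T ∩ U').card)]

lemma core_subset (Q : Finpartition (univ : Finset V)) (X : Finset V) : core Q X ⊆ X :=
  filter_subset _ _

lemma core_closed (Q : Finpartition (univ : Finset V)) (X : Finset V) :
    ∀ u ∈ core Q X, Q.part u ⊆ core Q X := by
  intro u hu w hw
  have hu' := (mem_filter.1 hu).2
  refine mem_filter.2 ⟨hu' hw, ?_⟩
  rwa [Q.part_eq_of_mem (Q.part_mem.2 (mem_univ u)) hw]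

lemma core_inter_closed {P Q : Finpartition (univ : Finset V)} (hQP : Q ≤ P) (X : Finset V)
    {U : Finset V} (hU : U ∈ P.parts) : ∀ u ∈ core Q X ∩ U, Q.part u ⊆ core Q X ∩ U := by
  intro u hu
  rw [mem_inter] at hu
  exact subset_inter (core_closed Q X u hu.1) (part_subset_of_le hQP hU hu.2)

/-- Replacing a block by a sub-block changes a sum of terms bounded by one by at most the number
of discarded pairs. -/
lemma abs_sum_le_of_subset {A A' B B' : Finset V} (hA : A' ⊆ A) (hB : B' ⊆ B) (g : V → V → ℝ)
    (hg : ∀ u v, |g u v| ≤ 1) :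
    |∑ u ∈ A, ∑ v ∈ B, g u v| ≤ |∑ u ∈ A', ∑ v ∈ B', g u v| +
      ((A.card : ℝ) * B.card - A'.card * B'.card) := by
  have hsub : A' ×ˢ B' ⊆ A ×ˢ B := product_subset_product hA hB
  rw [← sum_product' A B g, ← sum_product' A' B' g, ← sum_sdiff hsub, add_comm]
  refine (abs_add_le _ _).trans (add_le_add le_rfl ?_)
  refine (abs_sum_le_sum_abs _ _).trans ((sum_le_sum fun p _ => hg p.1 p.2).trans ?_)
  rw [sum_const, nsmul_eq_mul, mul_one, cast_card_sdiff hsub, card_product, card_product]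
  push_cast
  exact le_rfl

lemma sum_card_inter_mul (P : Finpartition (univ : Finset V)) (S T : Finset V) :
    ∑ U ∈ P.parts, ∑ U' ∈ P.parts, ((S ∩ U).card : ℝ) * (T ∩ U').card = S.card * T.card := by
  have := sum_parts₂ P S T (fun _ _ => 1)
  simpa using this

/-- Passing from `S, T` to their cores loses only the discarded pairs. -/
lemma irregularity_le {P Q : Finpartition (univ : Finset V)} (hQP : Q ≤ P) (S T : Finset V) :
    ∑ U ∈ P.parts, ∑ U' ∈ P.parts,
      |∑ u ∈ S ∩ U, ∑ v ∈ T ∩ U', (adjInd G u v - stepFn G P u v)| ≤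
    ∑ u ∈ core Q S, ∑ v ∈ core Q T, |stepFn G Q u v - stepFn G P u v| +
      ((S.card : ℝ) * T.card - (core Q S).card * (core Q T).card) := by
  rw [← sum_parts₂ P (core Q S) (core Q T), ← sum_card_inter_mul P S T,
    ← sum_card_inter_mul P (core Q S) (core Q T)]
  simp_rw [← sum_sub_distrib, ← sum_add_distrib]
  refine sum_le_sum fun U hU => sum_le_sum fun U' hU' => ?_
  refine (abs_sum_le_of_subset (inter_subset_inter_right (core_subset Q S))
    (inter_subset_inter_right (core_subset Q T)) _ (abs_adjInd_sub_stepFn_le G P)).trans ?_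
  refine add_le_add ?_ le_rfl
  have h := sum_stepFn_of_closed G Q (core_inter_closed hQP S hU) (core_inter_closed hQP T hU')
  simp_rw [sum_sub_distrib]
  rw [← h]
  simp_rw [← sum_sub_distrib]
  refine (abs_sum_le_sum_abs _ _).trans (sum_le_sum fun u _ => abs_sum_le_sum_abs _ _)

lemma sq_sum_abs_le (A B : Finset V) (g : V → V → ℝ) :
    (∑ u ∈ A, ∑ v ∈ B, |g u v|) ^ 2 ≤ (A.card : ℝ) * B.card * ∑ u, ∑ v, g u v ^ 2 := by
  rw [← sum_product' A B fun u v => |g u v|]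
  refine (sq_sum_le_card_mul_sum_sq).trans ?_
  rw [card_product]
  push_cast
  refine mul_le_mul_of_nonneg_left ?_ (by positivity)
  simp_rw [sq_abs]
  rw [← sum_product' univ univ fun u v => g u v ^ 2]
  exact sum_le_sum_of_subset_of_nonneg (product_subset_product (subset_univ _) (subset_univ _))
    fun _ _ _ => sq_nonneg _

/-- A refinement that almost respects a witness of irregularity gains energy. -/
lemma gain {P Q : Finpartition (univ : Finset V)} (hQP : Q ≤ P) {ε : ℝ} (hε : 0 < ε) {t : ℕ}
    (ht : 4 / ε ^ 2 ≤ t) {S T : Finset V} (hS : ε * Fintype.card V ≤ S.card)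
    (hT : ε * Fintype.card V ≤ T.card)
    (hST : ε < ∑ U ∈ P.parts, ∑ U' ∈ P.parts,
      ((S ∩ U).card : ℝ) * ((T ∩ U').card : ℝ) / (S.card * T.card) *
        |dens G (S ∩ U) (T ∩ U') - dens G U U'|)
    (hS' : (t : ℝ) * (S.card - (core Q S).card) ≤ Fintype.card V)
    (hT' : (t : ℝ) * (T.card - (core Q T).card) ≤ Fintype.card V) :
    energy G P + ε ^ 4 / 4 * (Fintype.card V : ℝ) ^ 2 ≤ energy G Q := by
  rw [irregularity_eq] at hST
  have hirr := irregularity_le G hQP S T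
  have hcs := sq_sum_abs_le (core Q S) (core Q T) fun u v => stepFn G Q u v - stepFn G P u v
  rw [energy_sub G hQP] at hcs
  have hSc : ((core Q S).card : ℝ) ≤ S.card := by exact_mod_cast card_le_card (core_subset Q S)
  have hTc : ((core Q T).card : ℝ) ≤ T.card := by exact_mod_cast card_le_card (core_subset Q T)
  have hD : 0 ≤ energy G Q - energy G P := by
    rw [← energy_sub G hQP]
    exact sum_nonneg fun _ _ => sum_nonneg fun _ _ => sq_nonneg _
  set M := ∑ U ∈ P.parts, ∑ U' ∈ P.parts,
      |∑ u ∈ S ∩ U, ∑ v ∈ T ∩ U', (adjInd G u v - stepFn G P u v)|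
  set N := ∑ u ∈ core Q S, ∑ v ∈ core Q T, |stepFn G Q u v - stepFn G P u v|
  set D := energy G Q - energy G P with hDdef
  have hs'0 : (0 : ℝ) ≤ (core Q S).card := Nat.cast_nonneg _
  have ht'0 : (0 : ℝ) ≤ (core Q T).card := Nat.cast_nonneg _
  have hs0 : (0 : ℝ) ≤ S.card := Nat.cast_nonneg _
  have ht0 : (0 : ℝ) ≤ T.card := Nat.cast_nonneg _
  have hn0 : (0 : ℝ) ≤ Fintype.card V := Nat.cast_nonneg _
  generalize ((core Q S).card : ℝ) = s' at *
  generalize ((core Q T).card : ℝ) = t' at *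
  generalize (S.card : ℝ) = s at *
  generalize (T.card : ℝ) = τ at *
  generalize (Fintype.card V : ℝ) = n at *
  have hpos : 0 < s * τ := by
    rcases (mul_nonneg hs0 ht0).eq_or_lt with h | h
    · rw [← h, div_zero] at hST
      linarith
    · exact h
  rw [lt_div_iff₀ hpos] at hST
  have htpos : (0 : ℝ) < t := lt_of_lt_of_le (by positivity) ht
  have ht4 : 4 ≤ t * ε ^ 2 := by rwa [div_le_iff₀ (by positivity)] at ht
  -- Each of `S` and `T` loses at most an `ε/4` fraction of its elements.
  have hloss : ∀ x y : ℝ, ε * n ≤ x → t * (x - y) ≤ n → x - y ≤ ε / 4 * x := by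
    intro x y hx hxy
    have h1 : t * ε * (x - y) ≤ x := by nlinarith
    by_cases h0 : x - y ≤ 0
    · have : 0 ≤ x := le_trans (by positivity) hx
      have : 0 ≤ ε / 4 * x := by positivity
      linarith
    · push Not at h0
      have h2 : 4 * (x - y) ≤ t * ε ^ 2 * (x - y) := mul_le_mul_of_nonneg_right ht4 h0.le
      nlinarith
  have hls := hloss s s' hS hS'
  have hlt := hloss τ t' hT hT'
  have hN : ε / 2 * (s * τ) ≤ N := by
    have h1 : s * τ - s' * t' = (s - s') * τ + s' * (τ - t') := by ring
    have h2 : (s - s') * τ ≤ ε / 4 * s * τ := mul_le_mul_of_nonneg_right hls ht0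
    have h3 : s' * (τ - t') ≤ s * (ε / 4 * τ) :=
      mul_le_mul hSc hlt (by linarith) hs0
    nlinarith
  have hN2 : (ε / 2 * (s * τ)) ^ 2 ≤ s * τ * D := by
    refine (pow_le_pow_left₀ (by positivity) hN 2).trans (hcs.trans ?_)
    exact mul_le_mul_of_nonneg_right (mul_le_mul hSc hTc ht'0 hs0) hD
  have hD1 : ε ^ 2 / 4 * (s * τ) ≤ D := by
    refine le_of_mul_le_mul_left ?_ hpos
    nlinarith
  have hst : (ε * n) * (ε * n) ≤ s * τ := mul_le_mul hS hT (by positivity) hs0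
  have hfin : ε ^ 2 / 4 * ((ε * n) * (ε * n)) ≤ ε ^ 2 / 4 * (s * τ) :=
    mul_le_mul_of_nonneg_left hst (by positivity)
  have : ε ^ 2 / 4 * ((ε * n) * (ε * n)) = ε ^ 4 / 4 * n ^ 2 := by ring
  linarith

/-! ### Equitable refinements -/

lemma inter_mem_atomise {S T U : Finset V} (hST : Disjoint S T) (h : (S ∩ U).Nonempty) :
    S ∩ U ∈ (Finpartition.atomise U {S, T}).parts := by
  have hne : T ≠ S := by
    rintro rfl
    rw [disjoint_self_iff_empty] at hST
    simp [hST] at h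
  refine Finpartition.mem_atomise.2 ⟨h, {S}, by simp, ?_⟩
  ext i
  have : i ∈ S → i ∉ T := fun hi => disjoint_left.1 hST hi
  simp only [mem_filter, mem_insert, mem_singleton, forall_eq_or_imp, forall_eq, hne, mem_inter]
  tauto

/-- An equipartition can be refined by splitting each part in at most `t`, such that at
most `n/t` elements of `S` lie in new parts not contained in `S`, and likewise for `T`. -/
lemma exists_refinement {P : Finpartition (univ : Finset V)} (hP : P.IsEquipartition) {t : ℕ}
    (ht : 0 < t) {S T : Finset V} (hST : Disjoint S T) :
    ∃ Q : Finpartition (univ : Finset V), Q.IsEquipartition ∧ Q ≤ P ∧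
      Q.parts.card ≤ P.parts.card * t ∧
      (t : ℝ) * (S.card - (core Q S).card) ≤ Fintype.card V ∧
      (t : ℝ) * (T.card - (core Q T).card) ≤ Fintype.card V := by
  set m := (univ : Finset V).card / P.parts.card with hm
  set q := m / t with hq
  have hcard : ∀ U ∈ P.parts, U.card = m ∨ U.card = m + 1 :=
    fun U hU => hP.card_parts_eq_average hU
  rcases Nat.eq_zero_or_pos q with hq0 | hq0
  · have hmt : m < t := by
      rcases Nat.div_eq_zero_iff.1 (hq ▸ hq0) with h | h
      · omega
      · exact h
    have hc : ∀ X : Finset V, core ⊥ X = X := by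
      intro X
      refine filter_true_of_mem fun u hu => ?_
      rw [Finpartition.part_eq_of_mem ⊥ (t := {u}) (by simp) (by simp)]
      simpa using hu
    refine ⟨⊥, Finpartition.bot_isEquipartition _, bot_le, ?_, ?_, ?_⟩
    · rw [Finpartition.card_bot, ← P.sum_card_parts]
      refine (sum_le_card_nsmul _ _ t fun U hU => ?_).trans (by simp)
      rcases hcard U hU with h | h <;> omega
    · simp [hc]
    · simp [hc]
  · have hqt : t * q ≤ m := Nat.mul_div_le m t
    have hmlt : m < t * q + t := by
      have := Nat.lt_mul_div_succ m ht
      rw [mul_add, mul_one] at this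
      exact this
    have hab : ∀ U ∈ P.parts,
        (t - (U.card - t * q)) * q + (U.card - t * q) * (q + 1) = U.card := by
      intro U hU
      obtain ⟨b, hb⟩ : ∃ b, U.card = t * q + b :=
        Nat.exists_eq_add_of_le (by rcases hcard U hU with h | h <;> omega)
      obtain ⟨a, ha⟩ : ∃ a, t = b + a :=
        Nat.exists_eq_add_of_le (by rcases hcard U hU with h | h <;> omega)
      have h1 : U.card - t * q = b := by omega
      have h2 : t - b = a := by omega
      rw [h1, h2, hb, ha]
      ring
    let R : ∀ U ∈ P.parts, Finpartition U := fun U hU =>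
      (Finpartition.atomise U {S, T}).equitabilise (hab U hU)
    have hcore : ∀ X : Finset V,
        (∀ U ∈ P.parts, (X ∩ U).Nonempty → X ∩ U ∈ (Finpartition.atomise U {S, T}).parts) →
        (t : ℝ) * (X.card - (core (P.bind R) X).card) ≤ Fintype.card V := by
      intro X hX
      have hU : ∀ U ∈ P.parts, ((X \ core (P.bind R) X) ∩ U).card ≤ q := by
        intro U hU
        rcases (X ∩ U).eq_empty_or_nonempty with h | h
        · have : (X \ core (P.bind R) X) ∩ U = ∅ :=
            subset_empty.1 (h ▸ inter_subset_inter_right sdiff_subset)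
          simp [this]
        · refine (card_le_card ?_).trans
            (Finpartition.card_parts_equitabilise_subset_le _ (h := hab U hU) (hX U hU h))
          intro u hu
          simp only [mem_inter, mem_sdiff] at hu
          refine mem_sdiff.2 ⟨mem_inter.2 ⟨hu.1.1, hu.2⟩, fun hmem => hu.1.2 ?_⟩
          obtain ⟨y, hy, huy⟩ := mem_biUnion.1 hmem
          rw [mem_filter] at hy
          have hyb : y ∈ (P.bind R).parts := Finpartition.mem_bind.2 ⟨U, hU, hy.1⟩
          refine mem_filter.2 ⟨hu.1.1, ?_⟩
          rw [Finpartition.part_eq_of_mem _ hyb huy]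
          exact hy.2.trans inter_subset_left
      have hsum : (X \ core (P.bind R) X).card ≤ P.parts.card * q := by
        have h1 := sum_parts P (X \ core (P.bind R) X) fun _ => 1
        simp only [sum_const, nsmul_eq_mul, mul_one] at h1
        have h2 : (X \ core (P.bind R) X).card
            = ∑ U ∈ P.parts, ((X \ core (P.bind R) X) ∩ U).card := by exact_mod_cast h1.symm
        rw [h2]
        exact (sum_le_card_nsmul _ _ q hU).trans (by simp)
      have hfin : t * (X \ core (P.bind R) X).card ≤ Fintype.card V := by
        calc t * (X \ core (P.bind R) X).card ≤ t * (P.parts.card * q) :=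
              Nat.mul_le_mul_left _ hsum
          _ = P.parts.card * (t * q) := by ring
          _ ≤ P.parts.card * m := Nat.mul_le_mul_left _ hqt
          _ ≤ Fintype.card V := Nat.mul_div_le _ _
      rw [← cast_card_sdiff (core_subset _ _)]
      exact_mod_cast hfin
    refine ⟨P.bind R, ?_, ?_, ?_, ?_, ?_⟩
    · refine Set.equitableOn_iff_exists_eq_eq_add_one.2 ⟨q, fun W hW => ?_⟩
      obtain ⟨U, hU, h⟩ := Finpartition.mem_bind.1 (mem_coe.1 hW)
      exact Finpartition.card_eq_of_mem_parts_equitabilise h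
    · intro W hW
      obtain ⟨U, hU, h⟩ := Finpartition.mem_bind.1 hW
      exact ⟨U, hU, (R U hU).le h⟩
    · rw [Finpartition.card_bind]
      refine (sum_le_card_nsmul _ _ t fun U _ => ?_).trans (by simp)
      have h := Finpartition.card_parts_equitabilise (Finpartition.atomise U.1 {S, T})
        (hab U.1 U.2) hq0.ne'
      rw [show (R U.1 U.2).parts.card = _ from h]
      rcases hcard U.1 U.2 with h | h <;> omega
    · exact hcore S fun U _ h => inter_mem_atomise hST h
    · refine hcore T fun U _ h => ?_
      rw [pair_comm]
      exact inter_mem_atomise hST.symm h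

lemma increment {P : Finpartition (univ : Finset V)} (hP : P.IsEquipartition) {ε : ℝ}
    (hε : 0 < ε) {t : ℕ} (ht : 4 / ε ^ 2 ≤ t) (hreg : ¬ IsWeakRegular G ε P) :
    ∃ Q : Finpartition (univ : Finset V), Q.IsEquipartition ∧ Q ≤ P ∧
      Q.parts.card ≤ P.parts.card * t ∧
      energy G P + ε ^ 4 / 4 * (Fintype.card V : ℝ) ^ 2 ≤ energy G Q := by
  unfold IsWeakRegular at hreg
  push Not at hreg
  obtain ⟨S, T, hdisj, hS, hT, hST⟩ := hreg
  have htpos : 0 < t := by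
    have : (0 : ℝ) < t := lt_of_lt_of_le (by positivity) ht
    exact_mod_cast this
  obtain ⟨Q, hQ, hQP, hcard, h1, h2⟩ := exists_refinement hP htpos hdisj
  exact ⟨Q, hQ, hQP, hcard, gain G hQP hε ht hS hT hST h1 h2⟩

lemma isWeakRegular_of_card_eq_zero (h : Fintype.card V = 0) {ε : ℝ} (hε : 0 < ε)
    (P : Finpartition (univ : Finset V)) : IsWeakRegular G ε P := by
  intro S T _ _ _
  have : S = ∅ := by
    have := S.card_le_univ
    rw [← card_eq_zero]; omega
  subst this
  simpa using hε.le

end Basic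

/-! ### Iteration -/

/-- The number `t = ⌈4/ε²⌉` of pieces per step is at most `2^{4/ε}`, so `4/ε⁴` steps fit in the
claimed bound. -/
lemma ceil_pow_le {ε : ℝ} (hε : 0 < ε) (hε1 : ε ≤ 1) {k : ℕ} (hk : (k : ℝ) ≤ 4 / ε ^ 4) :
    ((⌈4 / ε ^ 2⌉₊ : ℕ) : ℝ) ^ k ≤ 2 ^ ((16 : ℝ) / ε ^ 5) := by
  have hy : 1 ≤ 2 / ε := by rw [le_div_iff₀ hε]; linarith
  have hb : 1 + 2 / ε ≤ (2 : ℝ) ^ (2 / ε) := by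
    have := one_add_mul_self_le_rpow_one_add (s := 1) (by norm_num) hy
    norm_num at this
    exact this
  have ht : ((⌈4 / ε ^ 2⌉₊ : ℕ) : ℝ) ≤ 2 ^ (4 / ε) := by
    calc ((⌈4 / ε ^ 2⌉₊ : ℕ) : ℝ) ≤ 4 / ε ^ 2 + 1 := (Nat.ceil_lt_add_one (by positivity)).le
      _ = (2 / ε) ^ 2 + 1 := by ring
      _ ≤ (1 + 2 / ε) ^ 2 := by nlinarith
      _ ≤ ((2 : ℝ) ^ (2 / ε)) ^ 2 := pow_le_pow_left₀ (by positivity) hb 2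
      _ = 2 ^ (4 / ε) := by
        rw [← Real.rpow_natCast, ← Real.rpow_mul (by norm_num)]
        congr 1
        push_cast
        ring
  calc ((⌈4 / ε ^ 2⌉₊ : ℕ) : ℝ) ^ k ≤ ((2 : ℝ) ^ (4 / ε)) ^ k :=
        pow_le_pow_left₀ (by positivity) ht k
    _ = 2 ^ (4 / ε * k) := by rw [← Real.rpow_natCast, ← Real.rpow_mul (by norm_num)]
    _ ≤ 2 ^ ((16 : ℝ) / ε ^ 5) := by
      apply Real.rpow_le_rpow_of_exponent_le (by norm_num)
      calc 4 / ε * k ≤ 4 / ε * (4 / ε ^ 4) := mul_le_mul_of_nonneg_left hk (by positivity)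
        _ = 16 / ε ^ 5 := by field_simp; norm_num

/-- **The (stronger) weak regularity lemma (Theorem 2.3).**
For every `ε > 0`, every graph `G` and every equipartition `P₀` of `V(G)`, there is a weak
`ε`-regular equipartition refining `P₀` of order at most `|P₀| · 2^{16/ε⁵}`. -/
theorem weak_regularity_lemma (ε : ℝ) (hε : 0 < ε)
    (V : Type) [Fintype V] [DecidableEq V] (G : SimpleGraph V)
    (P₀ : Finpartition (univ : Finset V)) (hP₀ : P₀.IsEquipartition) :
    ∃ Q : Finpartition (univ : Finset V), Q.IsEquipartition ∧ Q ≤ P₀ ∧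
      IsWeakRegular G ε Q ∧
      (Q.parts.card : ℝ) ≤ (P₀.parts.card : ℝ) * 2 ^ ((16 : ℝ) / ε ^ 5) := by
  have htriv : (P₀.parts.card : ℝ) ≤ (P₀.parts.card : ℝ) * 2 ^ ((16 : ℝ) / ε ^ 5) :=
    le_mul_of_one_le_right (Nat.cast_nonneg _)
      (Real.one_le_rpow (by norm_num) (by positivity))
  rcases Nat.eq_zero_or_pos (Fintype.card V) with hn | hn
  · exact ⟨P₀, hP₀, le_rfl, isWeakRegular_of_card_eq_zero G hn hε P₀, htriv⟩
  have hnR : (0 : ℝ) < Fintype.card V := by exact_mod_cast hn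
  by_cases hε1 : 1 < ε
  · -- No set has more than `|V|` elements, so the condition is vacuous.
    refine ⟨P₀, hP₀, le_rfl, fun S T _ hS _ => ?_, htriv⟩
    have : (S.card : ℝ) ≤ Fintype.card V := by exact_mod_cast S.card_le_univ
    nlinarith
  push Not at hε1
  by_contra hno
  push Not at hno
  have hstep : ∀ k : ℕ, ∃ P : Finpartition (univ : Finset V), P.IsEquipartition ∧ P ≤ P₀ ∧
      P.parts.card ≤ P₀.parts.card * ⌈4 / ε ^ 2⌉₊ ^ k ∧
      k * (ε ^ 4 / 4 * (Fintype.card V : ℝ) ^ 2) ≤ energy G P := by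
    intro k
    induction k with
    | zero => exact ⟨P₀, hP₀, le_rfl, by simp, by simpa using energy_nonneg G P₀⟩
    | succ k ih =>
      obtain ⟨P, hP, hPP, hc, hE⟩ := ih
      have hk : (k : ℝ) ≤ 4 / ε ^ 4 := by
        have h1 := hE.trans (energy_le G P)
        have h2 : k * (ε ^ 4 / 4) * (Fintype.card V : ℝ) ^ 2 ≤ 1 * (Fintype.card V : ℝ) ^ 2 := by
          linarith
        have h3 := le_of_mul_le_mul_right h2 (by positivity)
        rw [le_div_iff₀ (by positivity)]
        linarith
      have hbound : (P.parts.card : ℝ) ≤ (P₀.parts.card : ℝ) * 2 ^ ((16 : ℝ) / ε ^ 5) := by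
        have h1 : (P.parts.card : ℝ) ≤ P₀.parts.card * ((⌈4 / ε ^ 2⌉₊ : ℕ) : ℝ) ^ k := by
          exact_mod_cast hc
        exact h1.trans (mul_le_mul_of_nonneg_left (ceil_pow_le hε hε1 hk) (Nat.cast_nonneg _))
      have hreg : ¬ IsWeakRegular G ε P := fun h => (hno P hP hPP h).not_ge hbound
      obtain ⟨Q, hQ, hQP, hQc, hQE⟩ := increment G hP hε (Nat.le_ceil _) hreg
      refine ⟨Q, hQ, hQP.trans hPP, ?_, ?_⟩
      · rw [pow_succ, ← mul_assoc]
        exact hQc.trans (Nat.mul_le_mul_right _ hc)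
      · push_cast
        linarith
  obtain ⟨k, hk⟩ := exists_nat_gt (4 / ε ^ 4)
  obtain ⟨P, -, -, -, hE⟩ := hstep k
  have h1 := hE.trans (energy_le G P)
  rw [div_lt_iff₀ (by positivity)] at hk
  have h2 : 0 < (Fintype.card V : ℝ) ^ 2 := by positivity
  nlinarith
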